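/- For every m ∈ ℕ with m ∉ S there exist polynomials q, r ∈ ℝ[x] with r ∈ span{x^s : s ∈ S} and D(q) = x^m + r. (A complete sequence of canonical polynomials associated with D, indexed by all accessible degrees m ∉ S, exists.) -/

import Mathlib

open Polynomial

/-!
For each degree `n`, either some nonzero `D q` has degree `n`, or `n` is inaccessible and `X ^ n`
itself lies in the span of the inaccessible monomials. The sum of `range D` and that span therefore
contains a polynomial of every degree, and over a division ring such polynomials span everything.
-/

theorem submodule_eq_top_of_forall_exists_degree_eq_and_isUnit_leadingCoeff
    {R : Type*} [Ring R] {W : Submodule R R[X]}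
    (exists_mem : ∀ n : ℕ, ∃ f ∈ W, f.degree = n ∧ IsUnit f.leadingCoeff) : W = ⊤ := by
  choose f f_mem degree_f isUnit_leadingCoeff_f using exists_mem
  let f_sequence : Polynomial.Sequence R := ⟨f, degree_f⟩
  have span_eq_top : Submodule.span R (Set.range f) = ⊤ := f_sequence.span isUnit_leadingCoeff_f
  exact top_le_iff.1 (span_eq_top ▸ Submodule.span_le.2 (Set.range_subset_iff.2 f_mem))

/-- The set of inaccessible degrees of a linear map `D` into polynomials: those that are not the
degree of a nonzero value of `D`. The zero value is excluded because its `natDegree` is `0`. -/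
def inaccessibleDegrees {R M : Type*} [Semiring R] [AddCommMonoid M] [Module R M]
    (D : M →ₗ[R] R[X]) : Set ℕ :=
  {s | ∀ q, D q ≠ 0 → (D q).natDegree ≠ s}

section DivisionRing

variable {K M : Type*} [DivisionRing K] [AddCommMonoid M] [Module K M]

theorem range_sup_span_X_pow_inaccessibleDegrees (D : M →ₗ[K] K[X]) :
    LinearMap.range D ⊔ Submodule.span K ((X ^ ·) '' inaccessibleDegrees D) = ⊤ := by
  refine submodule_eq_top_of_forall_exists_degree_eq_and_isUnit_leadingCoeff fun n => ?_
  by_cases hn : n ∈ inaccessibleDegrees D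
  · exact ⟨X ^ n, Submodule.mem_sup_right (Submodule.subset_span ⟨n, hn, rfl⟩), degree_X_pow n,
      by simp⟩
  · obtain ⟨q, Dq_ne_zero, natDegree_Dq⟩ : ∃ q, D q ≠ 0 ∧ (D q).natDegree = n := by
      simpa [inaccessibleDegrees] using hn
    exact ⟨D q, Submodule.mem_sup_left ⟨q, rfl⟩,
      (degree_eq_iff_natDegree_eq Dq_ne_zero).2 natDegree_Dq,
      (leadingCoeff_ne_zero.2 Dq_ne_zero).isUnit⟩

theorem stmt_18_general (D : M →ₗ[K] K[X]) (f : K[X]) :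
    ∃ q, ∃ r ∈ Submodule.span K ((X ^ ·) '' inaccessibleDegrees D), D q = f + r := by
  have f_mem : f ∈ LinearMap.range D ⊔ Submodule.span K ((X ^ ·) '' inaccessibleDegrees D) :=
    range_sup_span_X_pow_inaccessibleDegrees D ▸ Submodule.mem_top
  obtain ⟨_, ⟨q, rfl⟩, r, hr, rfl⟩ := Submodule.mem_sup.1 f_mem
  exact ⟨q, -r, neg_mem hr, (add_neg_cancel_right _ _).symm⟩

end DivisionRing

/-- For every `m ∉ S` there exist polynomials `q, r` with
`r ∈ span {Xˢ : s ∈ S}` and `D q = Xᵐ + r`: a complete sequence of canonical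
polynomials, indexed by all accessible degrees, exists. -/
theorem stmt_18 (ν : ℕ) (p : ℕ → Polynomial ℝ) (hp : ∃ i ≤ ν, p i ≠ 0)
    (D : Polynomial ℝ →ₗ[ℝ] Polynomial ℝ)
    (hD : ∀ q, D q = ∑ i ∈ Finset.range (ν + 1), p i * (Polynomial.derivative^[i] q))
    (h : ℤ)
    (hh : IsGreatest {z : ℤ | ∃ i ≤ ν, p i ≠ 0 ∧ z = ((p i).natDegree : ℤ) - i} h)
    (N : ℕ)
    (hN : ∀ n : ℕ, N < n → D (X ^ n) ≠ 0 ∧ ((D (X ^ n)).natDegree : ℤ) = n + h)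
    (S : Set ℕ)
    (hS : S = {s : ℕ | ∀ q : Polynomial ℝ, D q ≠ 0 → (D q).natDegree ≠ s}) :
    ∀ m ∉ S, ∃ q r : Polynomial ℝ,
      r ∈ Submodule.span ℝ {u : Polynomial ℝ | ∃ s ∈ S, u = X ^ s} ∧
      D q = X ^ m + r := by
  subst hS
  intro m _
  simpa only [Set.image, inaccessibleDegrees, eq_comm] using stmt_18_general D (X ^ m)
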